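/- For all x, y ∈ ℝ, lim_{n→∞} n·P(X > a_n·x + b_n, ρ_n|X| + √(1-ρ_n²)·Y > a_n·y + b_n) = (1 - Φ(λ + (y-x)/(2λ)))·e^{-x} + (1 - Φ(λ + (x-y)/(2λ)))·e^{-y}, where Φ is the standard normal distribution function. -/

import Mathlib

open MeasureTheory Filter Real Set ProbabilityTheory Topology

noncomputable def stdNormalCDF (t : ℝ) : ℝ :=
  (Real.sqrt (2 * Real.pi))⁻¹ * ∫ s in Set.Iic t, Real.exp (-(s ^ 2) / 2)

/-!
In polar coordinates `X = R cos Θ`, and with `ψ = arccos ρ` the second coordinate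
`ρ X + √(1 - ρ²) Y` is `R cos (Θ - ψ)`. Given `Θ = θ`, both exceed their levels exactly when `R`
exceeds the larger of `(b + x / w(b)) / cos θ` and `(b + y / w(b)) / cos (θ - ψ)`. Put
`θ = t / κ` with `κ² = b w(b)`. Since `1 - cos θ ≈ t² / (2 κ²)` and `κ ψ → 2 λ`, this threshold is
`b + (max (x + t² / 2) (y + (t - 2 λ)² / 2) + o(1)) / w(b)`, so the joint tail is asymptotically
`P(R > b) / (2 π κ) * ∫ exp (-max (x + t² / 2) (y + (t - 2 λ)² / 2)) dt`, the dominating function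
coming from iterating the Gumbel relation along dyadic steps. The two parabolas cross once, which
splits the integral into two Gaussian tails. The case `ψ = 0`, `y = x` shows that `X` has a Gumbel
tail with the same `w`; hence `n P(X > b_n) → 1`, which eliminates the factor
`P(R > b) / (2 π κ)`.
-/

section TailFilter

variable {S T : ℝ → ℝ}

/-- The filter `u ↑ x_F`, where `x_F` is the right end of the set on which the survival function
`T` is positive. It is `atTop` when `x_F = ∞` and `𝓝[<] x_F` when `x_F` is finite and
`T x_F = 0`. -/
def tailFilter (T : ℝ → ℝ) : Filter ℝ :=
  map ((↑) : {u | 0 < T u} → ℝ) atTop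

theorem eventually_tailFilter_iff (hT : ∃ u, 0 < T u) {P : ℝ → Prop} :
    (∀ᶠ u in tailFilter T, P u) ↔ ∃ U, 0 < T U ∧ ∀ v, U ≤ v → 0 < T v → P v := by
  obtain ⟨u, hu⟩ := hT
  have : Nonempty {u | 0 < T u} := ⟨⟨u, hu⟩⟩
  rw [tailFilter, eventually_map, eventually_atTop]
  constructor
  · rintro ⟨⟨U, hU⟩, h⟩
    exact ⟨U, hU, fun v hUv hv => h ⟨v, hv⟩ hUv⟩
  · rintro ⟨U, hU, h⟩
    exact ⟨⟨U, hU⟩, fun v hUv => h v hUv v.2⟩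

theorem eventually_tailFilter_pos (T : ℝ → ℝ) : ∀ᶠ u in tailFilter T, 0 < T u :=
  eventually_map.2 (.of_forall fun u => u.2)

theorem tailFilter_neBot (hT : ∃ u, 0 < T u) : (tailFilter T).NeBot := by
  obtain ⟨u, hu⟩ := hT
  have : Nonempty {u | 0 < T u} := ⟨⟨u, hu⟩⟩
  exact map_neBot

theorem tailFilter_congr (h : ∀ u, 0 < S u ↔ 0 < T u) : tailFilter S = tailFilter T := by
  have hset : {u | 0 < S u} = {u | 0 < T u} := ext h
  rw [tailFilter, tailFilter, hset]

theorem isCountablyGenerated_tailFilter (hT : Antitone T) :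
    (tailFilter T).IsCountablyGenerated := by
  have : OrdConnected {u | 0 < T u} :=
    ⟨fun _ _ v hv _ hu => lt_of_lt_of_le hv (hT hu.2)⟩
  unfold tailFilter
  infer_instance

theorem tailFilter_eq_atTop (hT : ∀ u, 0 < T u) : tailFilter T = atTop := by
  ext s
  simp [← eventually_mem_set, eventually_tailFilter_iff ⟨0, hT 0⟩, hT]

theorem tailFilter_eq_nhdsLT {c : ℝ} (hT : ∀ u, 0 < T u ↔ u < c) : tailFilter T = 𝓝[<] c := by
  have hset : {u | 0 < T u} = Iio c := ext hT
  rw [tailFilter, hset, map_coe_Iio_atTop]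

end TailFilter

theorem tendsto_of_squeeze_family {ι : Type*} {l : Filter ι} {A : ℝ → ι → ℝ} {g : ι → ℝ}
    {φ : ℝ → ℝ} {z : ℝ} (hφ : ContinuousAt φ z) (hA : ∀ s, Tendsto (A s) l (𝓝 (φ s)))
    (hlower : ∀ s > z, ∀ᶠ i in l, A s i ≤ g i) (hupper : ∀ s < z, ∀ᶠ i in l, g i ≤ A s i) :
    Tendsto g l (𝓝 (φ z)) := by
  rw [tendsto_order]
  constructor
  · intro c hc
    obtain ⟨s, hcs, hzs⟩ : ∃ s, c < φ s ∧ z < s :=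
      (((hφ.mono_left (nhdsWithin_le_nhds (s := Ioi z))).eventually_const_lt hc).and
        self_mem_nhdsWithin).exists
    filter_upwards [(hA s).eventually_const_lt hcs, hlower s hzs] with i h₁ h₂
    exact h₁.trans_le h₂
  · intro c hc
    obtain ⟨s, hcs, hsz⟩ : ∃ s, φ s < c ∧ s < z :=
      (((hφ.mono_left (nhdsWithin_le_nhds (s := Iio z))).eventually_lt_const hc).and
        self_mem_nhdsWithin).exists
    filter_upwards [(hA s).eventually_lt_const hcs, hupper s hsz] with i h₁ h₂
    exact h₂.trans_lt h₁

/-- The survival function `T` lies in the Gumbel max-domain of attraction with positive scaling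
function `w`. Of a survival function only monotonicity, nonnegativity and nontriviality are
recorded. -/
structure IsGumbelTail (T w : ℝ → ℝ) : Prop where
  antitone : Antitone T
  nonneg : ∀ u, 0 ≤ T u
  exists_pos : ∃ u, 0 < T u
  scale_pos : ∀ u, 0 < w u
  tendsto_ratio : ∀ s, Tendsto (fun u => T (u + s / w u) / T u) (tailFilter T) (𝓝 (exp (-s)))

/-- The scale `κ` on which the angle localises: if the radius `R` has a Gumbel tail with scaling
function `w`, then `R cos Θ` exceeds a high level `u` essentially only for `|Θ|` of order
`1 / κ`. -/
noncomputable def angularScale (w : ℝ → ℝ) (u : ℝ) : ℝ :=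
  √(u * w u)

namespace IsGumbelTail

variable {T w : ℝ → ℝ}

theorem tendsto_add_inv_scale (h : IsGumbelTail T w) :
    Tendsto (fun u => u + 1 / w u) (tailFilter T) (tailFilter T) := by
  rw [tendsto_iff_eventually]
  intro P hP
  obtain ⟨U, hU, hUP⟩ := (eventually_tailFilter_iff h.exists_pos).1 hP
  have hratio := (h.tendsto_ratio 1).eventually_const_lt (exp_pos _)
  obtain ⟨V, hV, hVpos⟩ := (eventually_tailFilter_iff h.exists_pos).1 hratio
  refine (eventually_tailFilter_iff h.exists_pos).2 ⟨max U V, ?_, fun v hv hTv => ?_⟩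
  · rw [h.antitone.map_max]
    exact lt_min hU hV
  · have hstep : 0 < 1 / w v := one_div_pos.2 (h.scale_pos v)
    have hpos := hVpos v (le_of_max_le_right hv) hTv
    exact hUP _ (by linarith [le_of_max_le_left hv]) ((div_pos_iff_of_pos_right hTv).1 hpos)

-- A positive limit would force the ratio `T (u + 1 / w u) / T u` to tend to `1 ≠ exp (-1)`.
theorem tendsto_zero (h : IsGumbelTail T w) : Tendsto T (tailFilter T) (𝓝 0) := by
  have := tailFilter_neBot h.exists_pos
  obtain ⟨L, hL⟩ : ∃ L, Tendsto T (tailFilter T) (𝓝 L) :=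
    ⟨_, tendsto_map'_iff.2 (tendsto_atTop_ciInf (h.antitone.comp_monotone (Subtype.mono_coe _))
      ⟨0, forall_mem_range.2 fun u => h.nonneg u⟩)⟩
  rcases eq_or_ne L 0 with rfl | hL0
  · exact hL
  · have hone : Tendsto (fun u => T (u + 1 / w u) / T u) (tailFilter T) (𝓝 (L / L)) :=
      (hL.comp h.tendsto_add_inv_scale).div hL hL0
    have := tendsto_nhds_unique hone (h.tendsto_ratio 1)
    rw [div_self hL0, eq_comm, exp_eq_one_iff] at this
    norm_num at this

theorem eventually_lt (h : IsGumbelTail T w) {a : ℝ} (ha : 0 < T a) :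
    ∀ᶠ u in tailFilter T, a < u := by
  filter_upwards [h.tendsto_zero.eventually_lt_const ha] with u hu
  exact h.antitone.reflect_lt hu

theorem eventually_add_div_scale_pos (h : IsGumbelTail T w) (h0 : 0 < T 0) (s : ℝ) :
    ∀ᶠ u in tailFilter T, 0 < u + s / w u := by
  have hlim : Tendsto (fun u => T (u + s / w u) / T u * T u) (tailFilter T) (𝓝 0) := by
    simpa using (h.tendsto_ratio s).mul h.tendsto_zero
  filter_upwards [hlim.eventually_lt_const h0, eventually_tailFilter_pos T] with u hu hTu
  rw [div_mul_cancel₀ _ hTu.ne'] at hu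
  exact h.antitone.reflect_lt hu

theorem tendsto_mul_scale_atTop (h : IsGumbelTail T w) (h0 : 0 < T 0) :
    Tendsto (fun u => u * w u) (tailFilter T) atTop := by
  refine tendsto_atTop.2 fun s => ?_
  filter_upwards [h.eventually_add_div_scale_pos h0 (-s)] with u hu
  have hw := h.scale_pos u
  have : (u + -s / w u) * w u = u * w u - s := by field_simp; ring
  linarith [mul_pos hu hw]

theorem tendsto_angularScale (h : IsGumbelTail T w) (h0 : 0 < T 0) :
    Tendsto (angularScale w) (tailFilter T) atTop :=
  tendsto_sqrt_atTop.comp (h.tendsto_mul_scale_atTop h0)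

theorem eventually_sq_angularScale (h : IsGumbelTail T w) (h0 : 0 < T 0) :
    ∀ᶠ u in tailFilter T, angularScale w u ^ 2 = u * w u := by
  filter_upwards [h.eventually_lt h0] with u hu
  exact sq_sqrt (mul_pos hu (h.scale_pos u)).le

theorem tendsto_ratio_comp (h : IsGumbelTail T w) {ι : Type*} {l : Filter ι} {b c : ι → ℝ} {z : ℝ}
    (hb : Tendsto b l (tailFilter T)) (hc : Tendsto c l (𝓝 z)) :
    Tendsto (fun i => T (b i + c i / w (b i)) / T (b i)) l (𝓝 (exp (-z))) := by
  refine tendsto_of_squeeze_family (φ := fun s => exp (-s)) (by fun_prop)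
    (fun s => (h.tendsto_ratio s).comp hb) (fun s hs => ?_) (fun s hs => ?_)
  · filter_upwards [hc.eventually_lt_const hs] with i hi
    exact div_le_div_of_nonneg_right (h.antitone (by gcongr; exact (h.scale_pos _).le))
      (h.nonneg _)
  · filter_upwards [hc.eventually_const_lt hs] with i hi
    exact div_le_div_of_nonneg_right (h.antitone (by gcongr; exact (h.scale_pos _).le))
      (h.nonneg _)

-- The step `1 / w` at most doubles: otherwise two steps would carry `u` past `u + 3 / w u`,
-- although they cost a factor of about `exp (-2)` only.
theorem eventually_half_le_and_step_le (h : IsGumbelTail T w) :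
    ∀ᶠ u in tailFilter T,
      T (u + 1 / w u) ≤ 1 / 2 * T u ∧ 1 / w (u + 1 / w u) ≤ 2 * (1 / w u) := by
  have hlower : (1 : ℝ) / 4 < exp (-1) := by linarith [exp_neg_one_gt_d9]
  have hupper : exp (-1) < 1 / 2 := by linarith [exp_neg_one_lt_d9]
  have hcube : exp (-3) < 1 / 16 :=
    calc exp (-3) = exp (-1) ^ 3 := by rw [← exp_nat_mul]; norm_num
      _ < (3 / 8) ^ 3 := by gcongr; linarith [exp_neg_one_lt_d9]
      _ < 1 / 16 := by norm_num
  have hquarter : ∀ᶠ u in tailFilter T, 1 / 4 < T (u + 1 / w u) / T u :=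
    (h.tendsto_ratio 1).eventually_const_lt hlower
  have hpos := eventually_tailFilter_pos T
  filter_upwards [hquarter, h.tendsto_add_inv_scale.eventually hquarter, hpos,
    h.tendsto_add_inv_scale.eventually hpos, (h.tendsto_ratio 1).eventually_lt_const hupper,
    (h.tendsto_ratio 3).eventually_lt_const hcube] with u h₁ h₂ hu hu' hhalf h₃
  rw [lt_div_iff₀ hu] at h₁
  rw [lt_div_iff₀ hu'] at h₂
  rw [div_lt_iff₀ hu] at hhalf h₃
  refine ⟨hhalf.le, le_of_not_gt fun hstep => ?_⟩
  have : T (u + 1 / w u + 1 / w (u + 1 / w u)) ≤ T (u + 3 / w u) := by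
    apply h.antitone
    linarith [show 3 / w u = 3 * (1 / w u) by ring]
  linarith

theorem eventually_apply_add_two_pow_le (h : IsGumbelTail T w) :
    ∀ᶠ u in tailFilter T, ∀ k : ℕ, T (u + (2 ^ k - 1) / w u) ≤ (1 / 2) ^ k * T u := by
  have hpos := h.tendsto_add_inv_scale.eventually (eventually_tailFilter_pos T)
  obtain ⟨U, hU, hUv⟩ := (eventually_tailFilter_iff h.exists_pos).1
    (h.eventually_half_le_and_step_le.and hpos)
  refine (eventually_tailFilter_iff h.exists_pos).2 ⟨U, hU, fun v hv hTv k => ?_⟩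
  induction k generalizing v with
  | zero => simp
  | succ k ih =>
    obtain ⟨⟨hhalf, hstep⟩, hTv'⟩ := hUv v hv hTv
    have hw : 0 < 1 / w v := one_div_pos.2 (h.scale_pos v)
    have hk : (0 : ℝ) ≤ 2 ^ k - 1 := sub_nonneg.2 (one_le_pow₀ one_le_two)
    calc T (v + (2 ^ (k + 1) - 1) / w v)
        ≤ T (v + 1 / w v + (2 ^ k - 1) / w (v + 1 / w v)) := by
          apply h.antitone
          calc v + 1 / w v + (2 ^ k - 1) / w (v + 1 / w v)
              = v + 1 / w v + (2 ^ k - 1) * (1 / w (v + 1 / w v)) := by ring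
            _ ≤ v + 1 / w v + (2 ^ k - 1) * (2 * (1 / w v)) := by gcongr
            _ = v + (2 ^ (k + 1) - 1) / w v := by ring
      _ ≤ (1 / 2) ^ k * T (v + 1 / w v) := ih _ (by linarith) hTv'
      _ ≤ (1 / 2) ^ k * (1 / 2 * T v) := by gcongr
      _ = (1 / 2) ^ (k + 1) * T v := by ring

theorem eventually_forall_le_two_div (h : IsGumbelTail T w) :
    ∀ᶠ u in tailFilter T, ∀ s ≥ 0, T (u + s / w u) ≤ 2 / (1 + s) * T u := by
  filter_upwards [h.eventually_apply_add_two_pow_le] with u hu s hs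
  obtain ⟨k, hk, hk'⟩ := exists_nat_pow_near (by linarith : 1 ≤ 1 + s) one_lt_two
  have hTu := h.nonneg u
  calc T (u + s / w u) ≤ T (u + (2 ^ k - 1) / w u) := by
        apply h.antitone
        have := h.scale_pos u
        gcongr
        linarith
    _ ≤ (1 / 2) ^ k * T u := hu k
    _ ≤ 2 / (1 + s) * T u := by
        gcongr
        rw [one_div_pow, div_le_div_iff₀ (by positivity) (by linarith)]
        linarith [pow_succ (2 : ℝ) k]

theorem exists_eventually_forall_le_div (h : IsGumbelTail T w) (x : ℝ) :
    ∃ K, ∀ᶠ u in tailFilter T, ∀ s ≥ 0, T (u + (x + s) / w u) ≤ K / (1 + s) * T u := by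
  refine ⟨4 + 2 * exp (-x) * (1 + 2 * |x|), ?_⟩
  have hx : exp (-x) < 2 * exp (-x) := by linarith [exp_pos (-x)]
  filter_upwards [h.eventually_forall_le_two_div, (h.tendsto_ratio x).eventually_lt_const hx,
    eventually_tailFilter_pos T] with u hbound hratio hTu s hs
  rw [div_lt_iff₀ hTu] at hratio
  rcases le_total (2 * |x|) s with hxs | hsx
  · have hxs_nonneg : 0 ≤ x + s := by linarith [neg_abs_le x, abs_nonneg x]
    refine (hbound (x + s) hxs_nonneg).trans ?_
    gcongr ?_ * T u
    rw [div_le_div_iff₀ (by linarith) (by linarith)]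
    have : 0 ≤ exp (-x) * (1 + 2 * |x|) * (1 + (x + s)) := by positivity
    linarith [neg_abs_le x]
  · calc T (u + (x + s) / w u) ≤ T (u + x / w u) := by
          apply h.antitone
          have := h.scale_pos u
          gcongr
          linarith
      _ ≤ 2 * exp (-x) * T u := hratio.le
      _ ≤ (4 + 2 * exp (-x) * (1 + 2 * |x|)) / (1 + s) * T u := by
          gcongr
          rw [le_div_iff₀ (by linarith)]
          linarith [mul_le_mul_of_nonneg_left hsx (exp_pos (-x)).le]

end IsGumbelTail

/-- The upper quantile `inf {x | T x < p}` of a survival function `T`: for `p = 1 / n` it is the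
`1 - 1 / n` quantile of the distribution function `1 - T`. -/
noncomputable def tailQuantile (T : ℝ → ℝ) (p : ℝ) : ℝ :=
  sInf {x | T x < p}

theorem apply_lt_of_tailQuantile_lt {T : ℝ → ℝ} (hT : Antitone T) {p x : ℝ}
    (hne : {x | T x < p}.Nonempty) (hx : tailQuantile T p < x) : T x < p := by
  obtain ⟨v, hv, hvx⟩ := exists_lt_of_csInf_lt hne hx
  exact (hT hvx.le).trans_lt hv

theorem mem_lowerBounds_of_le_apply {T : ℝ → ℝ} (hT : Antitone T) {p u : ℝ} (hu : p ≤ T u) :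
    u ∈ lowerBounds {x | T x < p} :=
  fun _ hx => (hT.reflect_lt (lt_of_lt_of_le hx hu)).le

namespace IsGumbelTail

variable {T w : ℝ → ℝ}

theorem exists_pos_lt (h : IsGumbelTail T w) {p : ℝ} (hp : 0 < p) : ∃ u, 0 < T u ∧ T u < p :=
  have := tailFilter_neBot h.exists_pos
  ((eventually_tailFilter_pos T).and (h.tendsto_zero.eventually_lt_const hp)).exists

theorem tendsto_tailQuantile (h : IsGumbelTail T w) :
    Tendsto (tailQuantile T) (𝓝[>] 0) (tailFilter T) := by
  rw [tendsto_iff_eventually]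
  intro P hP
  obtain ⟨U, hU, hUP⟩ := (eventually_tailFilter_iff h.exists_pos).1 hP
  filter_upwards [Ioo_mem_nhdsGT hU] with p hp
  obtain ⟨u, hu, hup⟩ := h.exists_pos_lt hp.1
  have hbound := mem_lowerBounds_of_le_apply h.antitone hp.2.le
  exact hUP _ (le_csInf ⟨u, hup⟩ hbound) (hu.trans_le (h.antitone (csInf_le ⟨U, hbound⟩ hup)))

theorem tendsto_div_apply_tailQuantile (h : IsGumbelTail T w) :
    Tendsto (fun p => p / T (tailQuantile T p)) (𝓝[>] 0) (𝓝 1) := by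
  obtain ⟨u, hu⟩ := h.exists_pos
  suffices Tendsto (fun p => p / T (tailQuantile T p)) (𝓝[>] 0) (𝓝 (exp (-0))) by
    simpa using this
  refine tendsto_of_squeeze_family (φ := fun s => exp (-s)) (by fun_prop)
    (fun s => (h.tendsto_ratio s).comp h.tendsto_tailQuantile) (fun s hs => ?_) (fun s hs => ?_)
  · filter_upwards [self_mem_nhdsWithin] with p hp
    obtain ⟨v, -, hv⟩ := h.exists_pos_lt hp
    have hstep : 0 < s / w (tailQuantile T p) := div_pos hs (h.scale_pos _)
    exact div_le_div_of_nonneg_right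
      (apply_lt_of_tailQuantile_lt h.antitone ⟨v, hv⟩ (by linarith)).le (h.nonneg _)
  · filter_upwards [Ioo_mem_nhdsGT hu] with p hp
    have hstep : s / w (tailQuantile T p) < 0 := div_neg_of_neg_of_pos hs (h.scale_pos _)
    have hlt : tailQuantile T p + s / w (tailQuantile T p) < tailQuantile T p := by linarith
    have hnotMem := notMem_of_lt_csInf hlt ⟨u, mem_lowerBounds_of_le_apply h.antitone hp.2.le⟩
    exact div_le_div_of_nonneg_right (not_lt.1 hnotMem) (h.nonneg _)

end IsGumbelTail

section Laplace

variable {T w : ℝ → ℝ} {ι : Type*} {l : Filter ι}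

theorem integrable_inv_one_add_mul_sq {c : ℝ} (hc : 0 < c) :
    Integrable fun t : ℝ => (1 + c * t ^ 2)⁻¹ := by
  have := integrable_inv_one_add_sq.comp_mul_left' (R := √c) (by positivity)
  simpa only [mul_pow, sq_sqrt hc.le] using this

-- Rescaling `θ = t / κ` and dominating the integrand through the uniform tail bound.
theorem IsGumbelTail.tendsto_mul_integral (h : IsGumbelTail T w) [l.IsCountablyGenerated]
    {b κ : ι → ℝ} (hb : Tendsto b l (tailFilter T)) (hκ : ∀ᶠ i in l, 0 < κ i)
    {p : ι → ℝ → ℝ} (hp : ∀ i, Measurable (p i)) (hp0 : ∀ i θ, 0 ≤ p i θ) {φ : ℝ → ℝ}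
    (hlim : ∀ t, Tendsto (fun i => p i (t / κ i) / T (b i)) l (𝓝 (φ t))) {x c : ℝ} (hc : 0 < c)
    (hdom : ∀ᶠ i in l, ∀ t, p i (t / κ i) ≤ T (b i + (x + c * t ^ 2) / w (b i))) :
    Tendsto (fun i => κ i / T (b i) * ∫ θ, p i θ) l (𝓝 (∫ t, φ t)) := by
  obtain ⟨K, hK⟩ := h.exists_eventually_forall_le_div x
  suffices Tendsto (fun i => ∫ t, p i (t / κ i) / T (b i)) l (𝓝 (∫ t, φ t)) by
    refine this.congr' ?_
    filter_upwards [hκ] with i hi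
    rw [integral_div, Measure.integral_comp_div, abs_of_pos hi, smul_eq_mul]
    ring
  refine tendsto_integral_filter_of_dominated_convergence (fun t => K * (1 + c * t ^ 2)⁻¹)
    (.of_forall fun i => ?_) ?_ ((integrable_inv_one_add_mul_sq hc).const_mul K)
    (.of_forall hlim)
  · exact (((hp i).comp (measurable_id.div_const _)).div_const _).aestronglyMeasurable
  · filter_upwards [hdom, hb.eventually hK, hb.eventually (eventually_tailFilter_pos T)]
      with i hdom hbound hpos
    refine .of_forall fun t => ?_
    rw [norm_of_nonneg (div_nonneg (hp0 i _) hpos.le), div_le_iff₀ hpos, ← div_eq_mul_inv]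
    exact (hdom t).trans (hbound _ (by positivity))

end Laplace

section Trigonometry

variable {ι : Type*} {l : Filter ι} {κ θ ψ : ι → ℝ} {τ m : ℝ}

theorem one_sub_cos_eq_sq_mul_sinc_sq (x : ℝ) : 1 - cos x = x ^ 2 / 2 * sinc (x / 2) ^ 2 := by
  have hsin : x / 2 * sinc (x / 2) = sin (x / 2) := by
    rcases eq_or_ne (x / 2) 0 with hx | hx
    · simp [hx]
    · rw [sinc_of_ne_zero hx, mul_div_cancel₀ _ hx]
  have hcos : cos x = 1 - 2 * sin (x / 2) ^ 2 := by
    rw [← cos_two_mul_eq_one_sub, mul_div_cancel₀ _ two_ne_zero]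
  rw [hcos, ← hsin]
  ring

theorem tendsto_zero_of_tendsto_mul (hκ : Tendsto κ l atTop)
    (hθ : Tendsto (fun i => κ i * θ i) l (𝓝 τ)) : Tendsto θ l (𝓝 0) := by
  refine (hθ.div_atTop hκ).congr' ?_
  filter_upwards [hκ.eventually_ne_atTop 0] with i hi
  rw [mul_div_cancel_left₀ _ hi]

theorem tendsto_sinc_half (hθ : Tendsto θ l (𝓝 0)) :
    Tendsto (fun i => sinc (θ i / 2)) l (𝓝 1) := by
  have := (continuous_sinc.tendsto (0 / 2)).comp (hθ.div_const 2)
  rwa [zero_div, sinc_zero] at this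

theorem tendsto_sq_mul_one_sub_cos (hκ : Tendsto κ l atTop)
    (hθ : Tendsto (fun i => κ i * θ i) l (𝓝 τ)) :
    Tendsto (fun i => κ i ^ 2 * (1 - cos (θ i))) l (𝓝 (τ ^ 2 / 2)) := by
  have hsinc := tendsto_sinc_half (tendsto_zero_of_tendsto_mul hκ hθ)
  have := ((hθ.pow 2).div_const 2).mul (hsinc.pow 2)
  rw [one_pow, mul_one] at this
  refine this.congr fun i => ?_
  rw [one_sub_cos_eq_sq_mul_sinc_sq]
  ring

theorem tendsto_cos_one_of_tendsto_mul (hκ : Tendsto κ l atTop)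
    (hθ : Tendsto (fun i => κ i * θ i) l (𝓝 τ)) : Tendsto (fun i => cos (θ i)) l (𝓝 1) := by
  simpa [Function.comp_def] using
    (continuous_cos.tendsto 0).comp (tendsto_zero_of_tendsto_mul hκ hθ)

theorem tendsto_add_sq_mul_one_sub_cos_div_cos (hκ : Tendsto κ l atTop)
    (hθ : Tendsto (fun i => κ i * θ i) l (𝓝 τ)) (x : ℝ) :
    Tendsto (fun i => (x + κ i ^ 2 * (1 - cos (θ i))) / cos (θ i)) l (𝓝 (x + τ ^ 2 / 2)) := by
  simpa [Pi.div_def] using ((tendsto_sq_mul_one_sub_cos hκ hθ).const_add x).div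
    (tendsto_cos_one_of_tendsto_mul hκ hθ) one_ne_zero

theorem tendsto_mul_of_tendsto_sq_mul_one_sub_cos (hκ : ∀ᶠ i in l, 0 ≤ κ i) (hψ : ∀ i, 0 ≤ ψ i)
    (hψ0 : Tendsto ψ l (𝓝 0)) (hm : 0 ≤ m)
    (hcos : Tendsto (fun i => κ i ^ 2 * (1 - cos (ψ i))) l (𝓝 (m ^ 2 / 2))) :
    Tendsto (fun i => κ i * ψ i) l (𝓝 m) := by
  have hsinc := tendsto_sinc_half hψ0
  have := (hcos.const_mul 2).sqrt.div hsinc one_ne_zero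
  rw [mul_div_cancel₀ _ two_ne_zero, sqrt_sq hm, div_one] at this
  refine this.congr' ?_
  filter_upwards [hκ, hsinc.eventually_const_lt zero_lt_one] with i hκi hpos
  rw [Pi.div_apply, one_sub_cos_eq_sq_mul_sinc_sq, div_eq_iff hpos.ne',
    ← sqrt_sq (show 0 ≤ κ i * ψ i * sinc (ψ i / 2) by have := hψ i; positivity)]
  congr 1
  ring

theorem mul_cos_sub_arccos {r : ℝ} (hr : r ∈ Icc (-1) 1) (R θ : ℝ) :
    R * cos (θ - arccos r) = r * (R * cos θ) + √(1 - r ^ 2) * (R * sin θ) := by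
  rw [cos_sub, cos_arccos hr.1 hr.2, sin_arccos]
  ring

theorem tendsto_mul_arccos {ρ : ι → ℝ} (hκ : Tendsto κ l atTop) (hρ : ∀ i, ρ i ∈ Icc (-1) 1)
    (hm : 0 ≤ m) (hlim : Tendsto (fun i => κ i ^ 2 * (1 - ρ i)) l (𝓝 (m ^ 2 / 2))) :
    Tendsto (fun i => κ i * arccos (ρ i)) l (𝓝 m) := by
  have hρ1 : Tendsto ρ l (𝓝 1) := by
    have hκ2 : Tendsto (fun i => κ i ^ 2) l atTop := (tendsto_pow_atTop two_ne_zero).comp hκ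
    simpa using (tendsto_zero_of_tendsto_mul hκ2 hlim).const_sub 1
  have harccos : Tendsto (fun i => arccos (ρ i)) l (𝓝 0) := by
    simpa [Function.comp_def] using (continuous_arccos.tendsto 1).comp hρ1
  refine tendsto_mul_of_tendsto_sq_mul_one_sub_cos (hκ.eventually_ge_atTop 0)
    (fun i => arccos_nonneg _) harccos hm ?_
  simpa only [fun i => cos_arccos (hρ i).1 (hρ i).2] using hlim

theorem one_add_sq_mul_cos_le_one {x : ℝ} (hx : |x| ≤ π) :
    (1 + 2 / π ^ 2 * x ^ 2) * cos x ≤ 1 := by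
  have hcos := cos_le_one_sub_mul_cos_sq hx
  have hsq : 0 ≤ 2 / π ^ 2 * x ^ 2 := by positivity
  nlinarith

end Trigonometry

section Gaussian

theorem integrable_exp_neg_sq_div_two : Integrable fun s : ℝ => exp (-(s ^ 2) / 2) := by
  convert integrable_exp_neg_mul_sq (b := 1 / 2) (by norm_num) using 3
  ring

theorem integral_exp_neg_sq_div_two : ∫ s : ℝ, exp (-(s ^ 2) / 2) = √(2 * π) := by
  convert integral_gaussian (1 / 2) using 4 <;> ring

theorem integral_Ioi_exp_neg_sq_div_two (d : ℝ) :
    ∫ s in Ioi d, exp (-(s ^ 2) / 2) = √(2 * π) * (1 - stdNormalCDF d) := by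
  have hsplit := integral_add_compl (measurableSet_Iic (a := d)) integrable_exp_neg_sq_div_two
  have hne : √(2 * π) ≠ 0 := by positivity
  rw [compl_Iic, integral_exp_neg_sq_div_two] at hsplit
  rw [stdNormalCDF, mul_sub, mul_one, mul_inv_cancel_left₀ hne]
  linarith

theorem integral_Ioi_exp_neg_add_sq_div_two (x d : ℝ) :
    ∫ t in Ioi d, exp (-(x + t ^ 2 / 2)) = √(2 * π) * ((1 - stdNormalCDF d) * exp (-x)) := by
  rw [← mul_assoc, ← integral_Ioi_exp_neg_sq_div_two, ← integral_mul_const]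
  congr 1 with t
  rw [← exp_add]
  ring_nf

theorem integral_Iic_exp_neg_add_sub_sq_div_two (y m d : ℝ) :
    ∫ t in Iic d, exp (-(y + (t - m) ^ 2 / 2)) =
      √(2 * π) * ((1 - stdNormalCDF (m - d)) * exp (-y)) := by
  have hreflect := (volume.measurePreserving_sub_left m).setIntegral_preimage_emb
    (MeasurableEquiv.subLeft m).measurableEmbedding (fun t => exp (-(y + t ^ 2 / 2))) (Ioi (m - d))
  rw [← integral_Ioi_exp_neg_add_sq_div_two, ← hreflect, integral_Iic_eq_integral_Iio]
  simp only [preimage_const_sub_Ioi, sub_sub_cancel]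
  congr 1 with t
  ring_nf

theorem integral_exp_neg_max_self (x : ℝ) :
    ∫ t : ℝ, exp (-max (x + t ^ 2 / 2) (x + (t - 0) ^ 2 / 2)) = √(2 * π) * exp (-x) := by
  simp only [sub_zero, max_self]
  rw [← integral_exp_neg_sq_div_two, ← integral_mul_const]
  congr 1 with t
  rw [← exp_add]
  ring_nf

theorem integrable_exp_neg_max (x y m : ℝ) :
    Integrable fun t : ℝ => exp (-max (x + t ^ 2 / 2) (y + (t - m) ^ 2 / 2)) := by
  refine (integrable_exp_neg_sq_div_two.const_mul (exp (-x))).mono'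
    (by fun_prop) (.of_forall fun t => ?_)
  rw [norm_of_nonneg (exp_pos _).le, ← exp_add, exp_le_exp]
  linarith [le_max_left (x + t ^ 2 / 2) (y + (t - m) ^ 2 / 2)]

-- The two branches of the maximum cross at `t = lam + (y - x) / (2 * lam)`.
theorem integral_exp_neg_max (x y : ℝ) {lam : ℝ} (hlam : 0 < lam) :
    ∫ t : ℝ, exp (-max (x + t ^ 2 / 2) (y + (t - 2 * lam) ^ 2 / 2)) = √(2 * π) *
      ((1 - stdNormalCDF (lam + (y - x) / (2 * lam))) * exp (-x) +
        (1 - stdNormalCDF (lam + (x - y) / (2 * lam))) * exp (-y)) := by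
  set d := lam + (y - x) / (2 * lam) with hd
  have hcross : 2 * lam * d = 2 * lam ^ 2 + (y - x) := by rw [hd]; field_simp
  have hreflect : lam + (x - y) / (2 * lam) = 2 * lam - d := by rw [hd]; ring
  rw [hreflect, mul_add, ← integral_Ioi_exp_neg_add_sq_div_two,
    ← integral_Iic_exp_neg_add_sub_sq_div_two,
    ← integral_add_compl (measurableSet_Ioi (a := d)) (integrable_exp_neg_max x y _), compl_Ioi]
  congr 1
  · refine setIntegral_congr_fun measurableSet_Ioi fun t ht => ?_
    have : y + (t - 2 * lam) ^ 2 / 2 ≤ x + t ^ 2 / 2 := by nlinarith [mem_Ioi.1 ht]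
    simp only [max_eq_left this]
  · refine setIntegral_congr_fun measurableSet_Iic fun t ht => ?_
    have : x + t ^ 2 / 2 ≤ y + (t - 2 * lam) ^ 2 / 2 := by nlinarith [mem_Iic.1 ht]
    simp only [max_eq_right this]

end Gaussian

section Survival

variable {Ω : Type*} [MeasurableSpace Ω] {μ : Measure Ω} {Z : Ω → ℝ}

/-- The survival function `u ↦ P(Z > u)` of a real random variable `Z`. -/
noncomputable def survival (μ : Measure Ω) (Z : Ω → ℝ) (u : ℝ) : ℝ :=
  μ.real {ω | u < Z ω}

theorem survival_nonneg (u : ℝ) : 0 ≤ survival μ Z u :=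
  measureReal_nonneg

theorem survival_antitone [IsFiniteMeasure μ] : Antitone (survival μ Z) :=
  fun _ _ h => measureReal_mono fun _ hω => h.trans_lt hω

theorem one_sub_measureReal_le_eq_survival [IsProbabilityMeasure μ] (hZ : Measurable Z) (u : ℝ) :
    1 - μ.real {ω | Z ω ≤ u} = survival μ Z u := by
  rw [← probReal_compl_eq_one_sub (measurableSet_le hZ measurable_const), survival]
  simp only [compl_ofPred, not_le]

theorem sInf_cdf_gt_eq_tailQuantile [IsProbabilityMeasure μ] (hZ : Measurable Z) (p : ℝ) :
    sInf {x | 1 - p < μ.real {ω | Z ω ≤ x}} = tailQuantile (survival μ Z) p := by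
  simp only [tailQuantile, ← one_sub_measureReal_le_eq_survival hZ, sub_lt_comm]

theorem survival_eq_one_of_neg [IsProbabilityMeasure μ] (hZ : ∀ᵐ ω ∂μ, 0 ≤ Z ω) {u : ℝ}
    (hu : u < 0) : survival μ Z u = 1 := by
  rw [survival, ← probReal_univ (μ := μ)]
  refine measureReal_congr (eventuallyEq_univ.2 ?_)
  filter_upwards [hZ] with ω hω using hu.trans_le hω

theorem exists_survival_pos [IsProbabilityMeasure μ] : ∃ u, 0 < survival μ Z u := by
  have hunion : ⋃ n : ℕ, {ω | -(n : ℝ) < Z ω} = univ :=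
    iUnion_eq_univ_iff.2 fun ω => (exists_nat_gt (-Z ω)).imp fun _ => neg_lt.1
  obtain ⟨n, hn⟩ := exists_measure_pos_of_not_measure_iUnion_null (μ := μ)
    (s := fun n : ℕ => {ω | -(n : ℝ) < Z ω}) (by simp [hunion])
  exact ⟨-n, ENNReal.toReal_pos hn.ne' (measure_ne_top _ _)⟩

theorem IsGumbelTail.survival_zero_pos [IsProbabilityMeasure μ] {w : ℝ → ℝ}
    (h : IsGumbelTail (survival μ Z) w) (hZ : ∀ᵐ ω ∂μ, 0 ≤ Z ω) : 0 < survival μ Z 0 := by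
  obtain ⟨u, hpos, hlt⟩ := h.exists_pos_lt one_pos
  have hu : 0 ≤ u := not_lt.1 fun hu => hlt.ne (survival_eq_one_of_neg hZ hu)
  exact hpos.trans_le (h.antitone hu)

theorem tailFilter_survival_eq [IsProbabilityMeasure μ] (hZ : Measurable Z) {l : Filter ℝ} {c : ℝ}
    (hl : (l = atTop ∧ ∀ x, μ.real {ω | Z ω ≤ x} < 1) ∨
      (l = 𝓝[<] c ∧ (∀ x < c, μ.real {ω | Z ω ≤ x} < 1) ∧ ∀ x, c ≤ x → μ.real {ω | Z ω ≤ x} = 1)) :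
    tailFilter (survival μ Z) = l := by
  have hpos : ∀ u, 0 < survival μ Z u ↔ μ.real {ω | Z ω ≤ u} < 1 := fun u => by
    rw [← one_sub_measureReal_le_eq_survival hZ, sub_pos]
  rcases hl with ⟨rfl, hlt⟩ | ⟨rfl, hlt, hone⟩
  · exact tailFilter_eq_atTop fun u => (hpos u).2 (hlt u)
  · refine tailFilter_eq_nhdsLT fun u => (hpos u).trans ⟨fun hu => ?_, hlt u⟩
    exact not_le.1 fun hcu => hu.ne (hone u hcu)

theorem isGumbelTail_survival [IsProbabilityMeasure μ] (hZ : Measurable Z) {w : ℝ → ℝ}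
    (hw : ∀ u, 0 < w u) {l : Filter ℝ} (hl : tailFilter (survival μ Z) = l)
    (hratio : ∀ s, Tendsto (fun u => (1 - μ.real {ω | Z ω ≤ u + s / w u}) /
      (1 - μ.real {ω | Z ω ≤ u})) l (𝓝 (exp (-s)))) :
    IsGumbelTail (survival μ Z) w where
  antitone := survival_antitone
  nonneg := survival_nonneg
  exists_pos := exists_survival_pos
  scale_pos := hw
  tendsto_ratio := by
    subst hl
    simpa only [one_sub_measureReal_le_eq_survival hZ] using hratio

theorem survival_le_of_ae_le [IsFiniteMeasure μ] {Z' : Ω → ℝ} (h : Z ≤ᵐ[μ] Z') {u : ℝ} :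
    survival μ Z u ≤ survival μ Z' u := by
  refine ENNReal.toReal_mono (measure_ne_top _ _) (measure_mono_ae ?_)
  filter_upwards [h] with ω hω hu using hu.trans_le hω

theorem measureReal_prodMk_mem_of_indepFun [IsFiniteMeasure μ] {α β : Type*} [MeasurableSpace α]
    [MeasurableSpace β] {X : Ω → α} {Y : Ω → β} (hX : Measurable X) (hY : Measurable Y)
    (hXY : IndepFun X Y μ) {E : Set (α × β)} (hE : MeasurableSet E) :
    μ.real {ω | (X ω, Y ω) ∈ E} = ∫ x, μ.real {ω | (x, Y ω) ∈ E} ∂μ.map X := by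
  have hprod := (indepFun_iff_map_prod_eq_prod_map_map hX.aemeasurable hY.aemeasurable).1 hXY
  have hsection : ∀ x, μ {ω | (x, Y ω) ∈ E} = μ.map Y (Prod.mk x ⁻¹' E) := fun x =>
    (Measure.map_apply hY (measurable_prodMk_left hE)).symm
  have hmeas : Measurable fun x => μ.map Y (Prod.mk x ⁻¹' E) := measurable_measure_prodMk_left hE
  simp only [measureReal_def, hsection]
  rw [integral_toReal hmeas.aemeasurable (.of_forall fun _ => measure_lt_top _ _),
    ← Measure.prod_apply hE, ← hprod, Measure.map_apply (hX.prodMk hY) hE]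
  rfl

end Survival

/-- `R` and `Θ` are the polar coordinates of a spherically symmetric random vector
`(R cos Θ, R sin Θ)` of the plane. -/
structure IsSphericalPolar {Ω : Type*} [MeasurableSpace Ω] (μ : Measure Ω) (R Θ : Ω → ℝ) :
    Prop where
  measurable_radius : Measurable R
  measurable_angle : Measurable Θ
  radius_nonneg : ∀ᵐ ω ∂μ, 0 ≤ R ω
  map_angle : μ.map Θ = (ENNReal.ofReal (2 * π))⁻¹ • volume.restrict (Ioo (-π) π)
  indepFun : IndepFun R Θ μ

section SectionTail

variable {Ω : Type*} [MeasurableSpace Ω] {μ : Measure Ω} {R Θ : Ω → ℝ} {u v ψ θ : ℝ}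

/-- The probability `P(R cos θ > u, R cos (θ - ψ) > v)` that a random radius `R` in the fixed
direction `θ` is extreme for the two coordinates at angle `ψ`. -/
noncomputable def sectionTail (μ : Measure Ω) (R : Ω → ℝ) (u v ψ θ : ℝ) : ℝ :=
  μ.real {ω | u < R ω * cos θ ∧ v < R ω * cos (θ - ψ)}

theorem measurableSet_sectionTail (u v ψ : ℝ) :
    MeasurableSet {p : ℝ × ℝ | u < p.2 * cos p.1 ∧ v < p.2 * cos (p.1 - ψ)} := by
  measurability

theorem measurable_sectionTail [IsFiniteMeasure μ] (hR : Measurable R) (u v ψ : ℝ) :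
    Measurable (sectionTail μ R u v ψ) := by
  have hE := measurableSet_sectionTail u v ψ
  convert (measurable_measure_prodMk_left (ν := μ.map R) hE).ennreal_toReal using 2 with θ
  rw [Measure.map_apply hR (measurable_prodMk_left hE)]
  rfl

theorem IsSphericalPolar.measureReal_eq_integral [IsFiniteMeasure μ]
    (h : IsSphericalPolar μ R Θ) (u v ψ : ℝ) :
    μ.real {ω | u < R ω * cos (Θ ω) ∧ v < R ω * cos (Θ ω - ψ)} =
      (2 * π)⁻¹ * ∫ θ, (Ioo (-π) π).indicator (sectionTail μ R u v ψ) θ := by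
  have := measureReal_prodMk_mem_of_indepFun h.measurable_angle h.measurable_radius
    h.indepFun.symm (measurableSet_sectionTail u v ψ)
  rw [h.map_angle, integral_smul_measure, ENNReal.toReal_inv,
    ENNReal.toReal_ofReal two_pi_pos.le, ← integral_indicator measurableSet_Ioo] at this
  exact this

theorem sectionTail_eq_survival (hθ : 0 < cos θ) (hψ : 0 < cos (θ - ψ)) :
    sectionTail μ R u v ψ θ = survival μ R (max (u / cos θ) (v / cos (θ - ψ))) := by
  simp only [sectionTail, survival, max_lt_iff, div_lt_iff₀ hθ, div_lt_iff₀ hψ]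

theorem sectionTail_le_survival [IsFiniteMeasure μ] (hR : ∀ᵐ ω ∂μ, 0 ≤ R ω)
    (hθ : |θ| ≤ π) : sectionTail μ R u v ψ θ ≤ survival μ R ((1 + 2 / π ^ 2 * θ ^ 2) * u) := by
  refine ENNReal.toReal_mono (measure_ne_top _ _) (measure_mono_ae ?_)
  filter_upwards [hR] with ω hRω hω
  have hcos := one_add_sq_mul_cos_le_one hθ
  calc (1 + 2 / π ^ 2 * θ ^ 2) * u < (1 + 2 / π ^ 2 * θ ^ 2) * (R ω * cos θ) := by
        gcongr; exact hω.1
    _ = R ω * ((1 + 2 / π ^ 2 * θ ^ 2) * cos θ) := by ring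
    _ ≤ R ω := mul_le_of_le_one_right hRω hcos

end SectionTail

section Asymptotics

variable {Ω : Type*} [MeasurableSpace Ω] {μ : Measure Ω} {R Θ : Ω → ℝ} {w : ℝ → ℝ}
  {ι : Type*} {l : Filter ι} {b : ι → ℝ}

theorem add_div_div_eq {u s c x : ℝ} (hs : s ≠ 0) (hc : c ≠ 0) :
    (u + x / s) / c = u + (x + u * s * (1 - c)) / c / s := by
  field_simp
  ring

theorem IsGumbelTail.tendsto_sectionTail_div (h : IsGumbelTail (survival μ R) w)
    (h0 : 0 < survival μ R 0) (hb : Tendsto b l (tailFilter (survival μ R))) {ψ θ : ι → ℝ}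
    {τ σ : ℝ} (hθ : Tendsto (fun i => angularScale w (b i) * θ i) l (𝓝 τ))
    (hψ : Tendsto (fun i => angularScale w (b i) * (θ i - ψ i)) l (𝓝 σ)) (x y : ℝ) :
    Tendsto (fun i => sectionTail μ R (b i + x / w (b i)) (b i + y / w (b i)) (ψ i) (θ i) /
      survival μ R (b i)) l (𝓝 (exp (-max (x + τ ^ 2 / 2) (y + σ ^ 2 / 2)))) := by
  have hκ := (h.tendsto_angularScale h0).comp hb
  have hmax := (tendsto_add_sq_mul_one_sub_cos_div_cos hκ hθ x).max
    (tendsto_add_sq_mul_one_sub_cos_div_cos hκ hψ y)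
  refine (h.tendsto_ratio_comp hb hmax).congr' ?_
  filter_upwards [hb.eventually (h.eventually_sq_angularScale h0),
    (tendsto_cos_one_of_tendsto_mul hκ hθ).eventually_const_lt zero_lt_one,
    (tendsto_cos_one_of_tendsto_mul hκ hψ).eventually_const_lt zero_lt_one]
    with i hsq hcosθ hcosψ
  have hw := h.scale_pos (b i)
  rw [sectionTail_eq_survival hcosθ hcosψ, add_div_div_eq hw.ne' hcosθ.ne',
    add_div_div_eq hw.ne' hcosψ.ne', max_add_add_left, max_div_div_right hw.le,
    Function.comp_apply, hsq]

theorem IsGumbelTail.eventually_sectionTail_le [IsProbabilityMeasure μ]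
    (h : IsGumbelTail (survival μ R) w) (hR : ∀ᵐ ω ∂μ, 0 ≤ R ω) (x : ℝ) :
    ∀ᶠ u in tailFilter (survival μ R), ∀ v ψ t : ℝ, |t / angularScale w u| ≤ π →
      sectionTail μ R (u + x / w u) v ψ (t / angularScale w u) ≤
        survival μ R (u + (x + 1 / π ^ 2 * t ^ 2) / w u) := by
  have h0 := h.survival_zero_pos hR
  filter_upwards [h.eventually_lt h0, h.eventually_sq_angularScale h0,
    h.eventually_add_div_scale_pos h0 (2 * x)] with u hu hsq hx v ψ t ht
  have hw := h.scale_pos u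
  have hhalf : u / 2 ≤ u + x / w u := by
    rw [mul_div_assoc] at hx
    linarith
  refine (sectionTail_le_survival hR ht).trans (h.antitone ?_)
  calc u + (x + 1 / π ^ 2 * t ^ 2) / w u
      = u + x / w u + 2 / π ^ 2 * (t / angularScale w u) ^ 2 * (u / 2) := by
        rw [div_pow, hsq]
        field_simp
        ring
    _ ≤ u + x / w u + 2 / π ^ 2 * (t / angularScale w u) ^ 2 * (u + x / w u) := by gcongr
    _ = (1 + 2 / π ^ 2 * (t / angularScale w u) ^ 2) * (u + x / w u) := by ring

theorem IsSphericalPolar.tendsto_mul_measureReal [IsProbabilityMeasure μ] [l.IsCountablyGenerated]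
    (hpolar : IsSphericalPolar μ R Θ) (h : IsGumbelTail (survival μ R) w)
    (hb : Tendsto b l (tailFilter (survival μ R))) {ψ : ι → ℝ} {m : ℝ}
    (hψ : Tendsto (fun i => angularScale w (b i) * ψ i) l (𝓝 m)) (x y : ℝ) :
    Tendsto (fun i => 2 * π * (angularScale w (b i) / survival μ R (b i)) *
        μ.real {ω | b i + x / w (b i) < R ω * cos (Θ ω) ∧
          b i + y / w (b i) < R ω * cos (Θ ω - ψ i)})
      l (𝓝 (∫ t, exp (-max (x + t ^ 2 / 2) (y + (t - m) ^ 2 / 2)))) := by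
  have hR := hpolar.radius_nonneg
  have h0 := h.survival_zero_pos hR
  have hκ := (h.tendsto_angularScale h0).comp hb
  have hlim := h.tendsto_mul_integral hb (hκ.eventually_gt_atTop 0)
    (p := fun i => (Ioo (-π) π).indicator
      (sectionTail μ R (b i + x / w (b i)) (b i + y / w (b i)) (ψ i)))
    (fun i => (measurable_sectionTail hpolar.measurable_radius _ _ _).indicator measurableSet_Ioo)
    (fun i => indicator_nonneg fun _ _ => measureReal_nonneg)
    (φ := fun t => exp (-max (x + t ^ 2 / 2) (y + (t - m) ^ 2 / 2)))
    (x := x) (c := 1 / π ^ 2) ?_ (by positivity) ?_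
  · refine hlim.congr fun i => ?_
    rw [hpolar.measureReal_eq_integral, Function.comp_apply]
    field_simp
  · intro t
    have hθ : Tendsto (fun i => angularScale w (b i) * (t / angularScale w (b i))) l (𝓝 t) := by
      refine tendsto_const_nhds.congr' ?_
      filter_upwards [hκ.eventually_ne_atTop 0] with i hi
      exact (mul_div_cancel₀ _ hi).symm
    have hθψ : Tendsto (fun i => angularScale w (b i) * (t / angularScale w (b i) - ψ i)) l
        (𝓝 (t - m)) := by
      simpa only [mul_sub] using hθ.sub hψ
    refine (h.tendsto_sectionTail_div h0 hb hθ hθψ x y).congr' ?_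
    have hzero := tendsto_zero_of_tendsto_mul hκ hθ
    filter_upwards [hzero.eventually_mem (Ioo_mem_nhds (neg_lt_zero.2 pi_pos) pi_pos)] with i hi
    rw [← indicator_of_mem hi (sectionTail μ R _ _ _)]
    rfl
  · filter_upwards [hb.eventually (h.eventually_sectionTail_le hR x)] with i hi t
    refine indicator_apply_le' (fun ht => hi _ _ _ (abs_le.2 ⟨ht.1.le, ht.2.le⟩))
      fun _ => h.nonneg _

end Asymptotics

theorem tendsto_one_div_natCast_nhdsGT : Tendsto (fun n : ℕ => 1 / (n : ℝ)) atTop (𝓝[>] 0) := by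
  simpa only [one_div, Function.comp_def] using
    tendsto_inv_atTop_nhdsGT_zero.comp tendsto_natCast_atTop_atTop

namespace IsSphericalPolar

variable {Ω : Type*} [MeasurableSpace Ω] {μ : Measure Ω} [IsProbabilityMeasure μ] {R Θ : Ω → ℝ}
  {w : ℝ → ℝ} {ι : Type*} {l : Filter ι} [l.IsCountablyGenerated] {b : ι → ℝ}

theorem tendsto_mul_survival_mul_cos (hpolar : IsSphericalPolar μ R Θ)
    (h : IsGumbelTail (survival μ R) w) (hb : Tendsto b l (tailFilter (survival μ R))) (x : ℝ) :
    Tendsto (fun i => 2 * π * (angularScale w (b i) / survival μ R (b i)) *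
      survival μ (fun ω => R ω * cos (Θ ω)) (b i + x / w (b i))) l
        (𝓝 (√(2 * π) * exp (-x))) := by
  rw [← integral_exp_neg_max_self]
  simpa only [survival, sub_zero, and_self] using
    hpolar.tendsto_mul_measureReal h hb (ψ := fun _ => 0) (m := 0)
      (by simpa using tendsto_const_nhds) x x

theorem survival_mul_cos_pos_iff (hpolar : IsSphericalPolar μ R Θ)
    (h : IsGumbelTail (survival μ R) w) (u : ℝ) :
    0 < survival μ (fun ω => R ω * cos (Θ ω)) u ↔ 0 < survival μ R u := by
  have := tailFilter_neBot h.exists_pos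
  have := isCountablyGenerated_tailFilter h.antitone
  constructor <;> intro hu
  · refine hu.trans_le (survival_le_of_ae_le ?_)
    filter_upwards [hpolar.radius_nonneg] with ω hω
    exact mul_le_of_le_one_right hω (cos_le_one _)
  · have hlim := (hpolar.tendsto_mul_survival_mul_cos h tendsto_id 0).eventually_const_lt
      (u := 0) (by positivity)
    obtain ⟨v, hv, huv⟩ := (hlim.and (h.eventually_lt hu)).exists
    have hpos : 0 < survival μ (fun ω => R ω * cos (Θ ω)) v := by
      refine (survival_nonneg v).lt_of_ne' fun hzero => hv.ne' ?_
      simp [hzero]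
    exact hpos.trans_le (survival_antitone huv.le)

theorem tailFilter_survival_mul_cos (hpolar : IsSphericalPolar μ R Θ)
    (h : IsGumbelTail (survival μ R) w) :
    tailFilter (survival μ fun ω => R ω * cos (Θ ω)) = tailFilter (survival μ R) :=
  tailFilter_congr (hpolar.survival_mul_cos_pos_iff h)

theorem tendsto_measureReal_div_survival_mul_cos (hpolar : IsSphericalPolar μ R Θ)
    (h : IsGumbelTail (survival μ R) w) (hb : Tendsto b l (tailFilter (survival μ R)))
    {ψ : ι → ℝ} {m : ℝ} (hψ : Tendsto (fun i => angularScale w (b i) * ψ i) l (𝓝 m)) (x y : ℝ) :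
    Tendsto (fun i => μ.real {ω | b i + x / w (b i) < R ω * cos (Θ ω) ∧
        b i + y / w (b i) < R ω * cos (Θ ω - ψ i)} /
          survival μ (fun ω => R ω * cos (Θ ω)) (b i))
      l (𝓝 ((∫ t, exp (-max (x + t ^ 2 / 2) (y + (t - m) ^ 2 / 2))) / √(2 * π))) := by
  have hmarginal : Tendsto (fun i => 2 * π * (angularScale w (b i) / survival μ R (b i)) *
      survival μ (fun ω => R ω * cos (Θ ω)) (b i)) l (𝓝 √(2 * π)) := by
    simpa using hpolar.tendsto_mul_survival_mul_cos h hb 0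
  have hne : √(2 * π) ≠ 0 := by positivity
  refine ((hpolar.tendsto_mul_measureReal h hb hψ x y).div hmarginal hne).congr' ?_
  filter_upwards [hmarginal.eventually_ne hne] with i hi
  exact mul_div_mul_left _ _ (left_ne_zero_of_mul hi)

-- Taking `ψ = 0` and `y = x` in the joint asymptotics returns the marginal tail.
theorem isGumbelTail_mul_cos (hpolar : IsSphericalPolar μ R Θ)
    (h : IsGumbelTail (survival μ R) w) :
    IsGumbelTail (survival μ fun ω => R ω * cos (Θ ω)) w where
  antitone := survival_antitone
  nonneg := survival_nonneg
  exists_pos := h.exists_pos.imp fun u => (hpolar.survival_mul_cos_pos_iff h u).2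
  scale_pos := h.scale_pos
  tendsto_ratio s := by
    have := isCountablyGenerated_tailFilter h.antitone
    have hne : √(2 * π) ≠ 0 := by positivity
    have hratio := hpolar.tendsto_measureReal_div_survival_mul_cos h tendsto_id
      (ψ := fun _ => 0) (m := 0) (by simpa using tendsto_const_nhds) s s
    rw [integral_exp_neg_max_self, mul_div_cancel_left₀ _ hne] at hratio
    rw [hpolar.tailFilter_survival_mul_cos h]
    simpa only [survival, sub_zero, and_self, id_eq] using hratio

theorem tendsto_of_eq_tailQuantile (hpolar : IsSphericalPolar μ R Θ)
    (h : IsGumbelTail (survival μ R) w) {b : ℕ → ℝ}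
    (hb : ∀ n : ℕ, b n = tailQuantile (survival μ fun ω => R ω * cos (Θ ω)) (1 / n)) :
    Tendsto b atTop (tailFilter (survival μ R)) := by
  rw [← hpolar.tailFilter_survival_mul_cos h, funext hb]
  exact (hpolar.isGumbelTail_mul_cos h).tendsto_tailQuantile.comp tendsto_one_div_natCast_nhdsGT

theorem tendsto_natCast_mul_measureReal (hpolar : IsSphericalPolar μ R Θ)
    (h : IsGumbelTail (survival μ R) w) {b : ℕ → ℝ}
    (hb : ∀ n : ℕ, b n = tailQuantile (survival μ fun ω => R ω * cos (Θ ω)) (1 / n))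
    {ψ : ℕ → ℝ} {m : ℝ}
    (hψ : Tendsto (fun n => angularScale w (b n) * ψ n) atTop (𝓝 m)) (x y : ℝ) :
    Tendsto (fun n : ℕ => n * μ.real {ω | b n + x / w (b n) < R ω * cos (Θ ω) ∧
        b n + y / w (b n) < R ω * cos (Θ ω - ψ n)})
      atTop (𝓝 ((∫ t, exp (-max (x + t ^ 2 / 2) (y + (t - m) ^ 2 / 2))) / √(2 * π))) := by
  have hS := hpolar.isGumbelTail_mul_cos h
  have hbtail := hpolar.tendsto_of_eq_tailQuantile h hb
  have hbpos := hbtail.eventually (eventually_tailFilter_pos _)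
  have hquantile := hS.tendsto_div_apply_tailQuantile.comp tendsto_one_div_natCast_nhdsGT
  have := (hpolar.tendsto_measureReal_div_survival_mul_cos h hbtail hψ x y).div hquantile
    one_ne_zero
  rw [div_one] at this
  refine this.congr' ?_
  filter_upwards [hbpos, eventually_gt_atTop 0] with n hn hn0
  rw [← hpolar.survival_mul_cos_pos_iff h] at hn
  have hn' : (n : ℝ) ≠ 0 := by positivity
  simp only [Pi.div_apply, Function.comp_apply, ← hb]
  field_simp

end IsSphericalPolar

theorem joint_tail_half_skew_gumbel_general {Ω : Type*} [MeasurableSpace Ω] (μ : Measure Ω)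
    [IsProbabilityMeasure μ] (R Θ : Ω → ℝ) (hpolar : IsSphericalPolar μ R Θ) (w : ℝ → ℝ)
    (hGumbel : IsGumbelTail (survival μ R) w) (b a : ℕ → ℝ)
    (hb : ∀ n : ℕ, b n = sInf {x | 1 - 1 / (n : ℝ) < μ.real {ω | R ω * cos (Θ ω) ≤ x}})
    (ha : ∀ n, a n = 1 / w (b n)) (ρ : ℕ → ℝ) (hρ : ∀ n, ρ n ∈ Icc (-1) 1) (lam : ℝ)
    (hlam : 0 < lam)
    (hHR : Tendsto (fun n => (1 - ρ n) * b n / a n) atTop (𝓝 (2 * lam ^ 2))) (x y : ℝ) :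
    Tendsto (fun n : ℕ => n * μ.real {ω | a n * x + b n < R ω * cos (Θ ω) ∧
        a n * y + b n < ρ n * |R ω * cos (Θ ω)| + √(1 - ρ n ^ 2) * (R ω * sin (Θ ω))})
      atTop (𝓝 ((1 - stdNormalCDF (lam + (y - x) / (2 * lam))) * exp (-x) +
        (1 - stdNormalCDF (lam + (x - y) / (2 * lam))) * exp (-y))) := by
  have hX : Measurable fun ω => R ω * cos (Θ ω) :=
    hpolar.measurable_radius.mul hpolar.measurable_angle.cos
  have h0 := hGumbel.survival_zero_pos hpolar.radius_nonneg
  simp only [sInf_cdf_gt_eq_tailQuantile hX] at hb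
  have hbtail := hpolar.tendsto_of_eq_tailQuantile hGumbel hb
  have hψ : Tendsto (fun n => angularScale w (b n) * arccos (ρ n)) atTop (𝓝 (2 * lam)) := by
    refine tendsto_mul_arccos ((hGumbel.tendsto_angularScale h0).comp hbtail) hρ (by positivity) ?_
    rw [show (2 * lam) ^ 2 / 2 = 2 * lam ^ 2 by ring]
    refine hHR.congr' ?_
    filter_upwards [hbtail.eventually (hGumbel.eventually_sq_angularScale h0)] with n hn
    rw [ha, one_div, div_inv_eq_mul, hn]
    ring
  have hlim := hpolar.tendsto_natCast_mul_measureReal hGumbel hb hψ x y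
  rw [integral_exp_neg_max x y hlam, mul_div_cancel_left₀ _ (by positivity)] at hlim
  refine hlim.congr' ?_
  filter_upwards [hbtail.eventually (hGumbel.eventually_add_div_scale_pos h0 x)] with n hn
  congr 3 with ω
  simp only [mul_cos_sub_arccos (hρ n), ha, one_div_mul_eq_div, add_comm _ (b n)]
  refine and_congr_right fun hω => ?_
  rw [abs_of_pos (hn.trans hω)]

theorem joint_tail_half_skew_gumbel
{Ω : Type*} [MeasurableSpace Ω] (μ : Measure Ω) [IsProbabilityMeasure μ]
    (R Θ : Ω → ℝ) (hRm : Measurable R) (hΘm : Measurable Θ)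
    (hRpos : ∀ᵐ ω ∂μ, 0 < R ω)
    (hΘunif : μ.map Θ = (ENNReal.ofReal (2 * π))⁻¹ • volume.restrict (Ioo (-π) π))
    (hindep : IndepFun R Θ μ)
    (X Y : Ω → ℝ)
    (hX : X = fun ω => R ω * Real.cos (Θ ω))
    (hY : Y = fun ω => R ω * Real.sin (Θ ω))
    (F G : ℝ → ℝ)
    (hF : F = fun x => (μ {ω | R ω ≤ x}).toReal)
    (hG : G = fun x => (μ {ω | X ω ≤ x}).toReal)
    (w : ℝ → ℝ) (hw : ∀ x, 0 < w x)
    (l : Filter ℝ)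
    (hendpoint : (l = atTop ∧ ∀ x, F x < 1) ∨
      (l = nhdsWithin 1 (Iio 1) ∧ (∀ x < 1, F x < 1) ∧ ∀ x, 1 ≤ x → F x = 1))
    (hGumbel : ∀ s : ℝ,
      Tendsto (fun u => (1 - F (u + s / w u)) / (1 - F u)) l (𝓝 (Real.exp (-s))))
    (b a : ℕ → ℝ)
    (hb : ∀ n : ℕ, b n = sInf {x | 1 - 1 / (n : ℝ) < G x})
    (ha : ∀ n : ℕ, a n = 1 / w (b n))
    (ρ : ℕ → ℝ) (hρ : ∀ n, ρ n ∈ Ioc (0 : ℝ) 1)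
    (lam : ℝ) (hlam : 0 < lam)
    (hHR : Tendsto (fun n : ℕ => (1 - ρ n) * b n / a n) atTop (𝓝 (2 * lam ^ 2))) :
    ∀ x y : ℝ,
      Tendsto (fun n : ℕ =>
          (n : ℝ) * (μ {ω | a n * x + b n < X ω ∧
            a n * y + b n < ρ n * |X ω| + Real.sqrt (1 - ρ n ^ 2) * Y ω}).toReal)
        atTop (𝓝
          ((1 - stdNormalCDF (lam + (y - x) / (2 * lam))) * Real.exp (-x) +
           (1 - stdNormalCDF (lam + (x - y) / (2 * lam))) * Real.exp (-y))) := by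
  subst hX hY hF hG
  refine joint_tail_half_skew_gumbel_general μ R Θ
    ⟨hRm, hΘm, hRpos.mono fun _ => le_of_lt, hΘunif, hindep⟩ w
    (isGumbelTail_survival hRm hw (tailFilter_survival_eq hRm hendpoint) hGumbel) b a hb ha ρ
    (fun n => ⟨by linarith [(hρ n).1], (hρ n).2⟩) lam hlam hHR
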